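/- (Local boundedness for subsolutions, classical version) Let N ≥ 3 be an integer, and let t > N and R > 0 be real numbers. There exists a constant C > 0, depending only on N, t and R, with the following property: whenever Ω ⊆ ℝ^N is open, y ∈ ℝ^N is such that the closed ball of radius 2R about y is contained in Ω, u : Ω → ℝ is C², g : Ω → ℝ is measurable with ∫_{B(y,2R)} |g|^{t/2} dx < ∞, and −Δu(x) + u(x) ≤ g(x) for all x ∈ Ω, then for every z ∈ B(y,R) one has u(z) ≤ C·( ( ∫_{B(y,2R)} max(u,0)² dx )^{1/2} + ( ∫_{B(y,2R)} |g|^{t/2} dx )^{2/t} ). -/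

import Mathlib

/-
Write `ρ` for `ballWeight`, a smooth weight supported in the unit ball, and `P` for
`ballPotential`, which satisfies `∇P = -2 ρ x`. By Green's formula the weighted averages
`r ↦ ∫ ρ x * w (z + r x)` have derivative `r / 2 * ∫ P x * Δw (z + r x)`. If `-Δw ≤ |g|`, then
Hölder's inequality bounds this derivative below by a multiple of `-r ^ (1 - n / p) * ‖g‖_p`, which
is integrable at `r = 0` because `n < 2 p`. Hence `w z`, the limit of the averages as `r → 0` up to
normalization, is at most their value at a fixed radius plus a multiple of `‖g‖_p`, and Hölder's
inequality bounds that value by the `L^q` norm of `w`. This applies to smooth convex approximations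
`w` of the positive part of `u`, for which `-Δw ≤ |g|` since `-Δu ≤ g` wherever `u > 0`.
-/

open MeasureTheory Real

/-- The Laplacian of `u` at `x`: the trace of the second derivative,
computed as the sum of pure second derivatives along the coordinate directions. -/
noncomputable def lap {N : ℕ} (u : EuclideanSpace ℝ (Fin N) → ℝ)
    (x : EuclideanSpace ℝ (Fin N)) : ℝ :=
  ∑ i, iteratedFDeriv ℝ 2 u x ![EuclideanSpace.single i 1, EuclideanSpace.single i 1]

/-- A smooth convex approximation of the positive part `s ↦ max s 0` within `ε`, with derivative
`smoothTransition (s / ε)`. -/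
noncomputable def smoothPosPart (ε s : ℝ) : ℝ :=
  ∫ τ in (0 : ℝ)..s, smoothTransition (τ / ε)

namespace smoothPosPart

variable (ε s : ℝ)

lemma hasDerivAt : HasDerivAt (smoothPosPart ε) (smoothTransition (s / ε)) s :=
  ((smoothTransition.continuous.comp (continuous_id.div_const ε)).integral_hasStrictDerivAt
    0 s).hasDerivAt

lemma differentiable : Differentiable ℝ (smoothPosPart ε) :=
  fun s ↦ (hasDerivAt ε s).differentiableAt

lemma deriv_eq : deriv (smoothPosPart ε) = fun s ↦ smoothTransition (s / ε) :=
  funext fun s ↦ (hasDerivAt ε s).deriv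

lemma contDiff {n : ℕ∞} : ContDiff ℝ n (smoothPosPart ε) := by
  refine ContDiff.of_le (contDiff_infty_iff_deriv.2 ⟨differentiable ε, ?_⟩)
    (mod_cast le_top)
  rw [deriv_eq]
  exact smoothTransition.contDiff.comp (contDiff_id.div_const ε)

lemma monotone : Monotone (smoothPosPart ε) :=
  monotone_of_deriv_nonneg (differentiable ε) fun s ↦ by
    simpa only [deriv_eq] using smoothTransition.nonneg (s / ε)

lemma monotone_self_sub : Monotone fun s ↦ s - smoothPosPart ε s :=
  monotone_of_hasDerivAt_nonneg (fun s ↦ (hasDerivAt_id s).fun_sub (hasDerivAt ε s))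
    fun s ↦ sub_nonneg.2 (smoothTransition.le_one (s / ε))

variable {ε s}

lemma convexOn (hε : 0 ≤ ε) : ConvexOn ℝ Set.univ (smoothPosPart ε) :=
  Monotone.convexOn_univ_of_deriv (differentiable ε) <| by
    rw [deriv_eq]
    exact fun s t hst ↦ smoothTransition.monotone (by gcongr)

lemma eq_zero_of_nonpos (hε : 0 ≤ ε) (hs : s ≤ 0) : smoothPosPart ε s = 0 := by
  refine intervalIntegral.integral_zero_ae (.of_forall fun τ hτ ↦ ?_)
  rw [Set.uIoc_of_ge hs] at hτ
  exact smoothTransition.zero_of_nonpos (div_nonpos_of_nonpos_of_nonneg hτ.2 hε)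

lemma nonneg (hε : 0 ≤ ε) : 0 ≤ smoothPosPart ε s :=
  (eq_zero_of_nonpos hε (min_le_right s 0)).ge.trans (monotone ε (min_le_left s 0))

lemma le_max (hε : 0 ≤ ε) : smoothPosPart ε s ≤ max s 0 := by
  have h := monotone_self_sub ε (le_max_right s 0)
  simp only [eq_zero_of_nonpos hε le_rfl, sub_zero, sub_nonneg] at h
  exact (monotone ε (le_max_left s 0)).trans h

lemma sub_le (hε : 0 < ε) : s - ε ≤ smoothPosPart ε s := by
  rcases le_total s ε with hs | hs
  · exact (sub_nonpos.2 hs).trans (nonneg hε.le)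
  have hint (a b : ℝ) : IntervalIntegrable (fun τ ↦ smoothTransition (τ / ε)) volume a b :=
    (smoothTransition.continuous.comp (continuous_id.div_const ε)).intervalIntegrable a b
  have htail : ∫ τ in ε..s, smoothTransition (τ / ε) = s - ε := by
    rw [← intervalIntegral.integral_congr (f := fun _ ↦ (1 : ℝ)) fun τ hτ ↦ ?_]
    · simp
    rw [Set.uIcc_of_le hs] at hτ
    exact (smoothTransition.one_of_one_le ((one_le_div hε).2 hτ.1)).symm
  calc s - ε ≤ smoothPosPart ε ε + ∫ τ in ε..s, smoothTransition (τ / ε) := by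
        rw [htail]; exact le_add_of_nonneg_left (nonneg hε.le)
    _ = smoothPosPart ε s := intervalIntegral.integral_add_adjacent_intervals (hint _ _) (hint _ _)

end smoothPosPart

section Laplacian

open InnerProductSpace Laplacian Module

variable {E : Type*} [NormedAddCommGroup E] [InnerProductSpace ℝ E] [FiniteDimensional ℝ E]

lemma laplacian_eq_sum_fderiv_fderiv {ι : Type*} [Fintype ι] (b : OrthonormalBasis ι ℝ E)
    (u : E → ℝ) (x : E) : Δ u x = ∑ i, fderiv ℝ (fderiv ℝ u) x (b i) (b i) := by
  simp [laplacian_eq_iteratedFDeriv_orthonormalBasis u b, iteratedFDeriv_two_apply]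

lemma continuous_laplacian {u : E → ℝ} (hu : ContDiff ℝ 2 u) : Continuous (Δ u) := by
  have : Continuous (fderiv ℝ (fderiv ℝ u)) :=
    (hu.fderiv_right (m := 1) (by norm_num)).continuous_fderiv one_ne_zero
  simp only [funext (laplacian_eq_sum_fderiv_fderiv (stdOrthonormalBasis ℝ E) u)]
  fun_prop

lemma laplacian_comp_add_smul {u : E → ℝ} (hu : ContDiff ℝ 2 u) (z x : E) (r : ℝ) :
    Δ (fun x ↦ u (z + r • x)) x = r ^ 2 * Δ u (z + r • x) := by
  have h := iteratedFDeriv_comp_const_smul (i := 2) r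
    (hu.comp (contDiff_const.add contDiff_id : ContDiff ℝ 2 (fun y ↦ z + y)))
  simp only [Function.comp_def, iteratedFDeriv_comp_add_left] at h
  simp [laplacian_eq_iteratedFDeriv_stdOrthonormalBasis, h, Finset.mul_sum]

/-- The term dropped from the chain rule is `φ'' (u x) * ‖∇ u x‖ ^ 2`. -/
lemma deriv_mul_laplacian_le_laplacian_comp {φ : ℝ → ℝ} (hφ : ContDiff ℝ 2 φ)
    (hφ' : ConvexOn ℝ Set.univ φ) {u : E → ℝ} {x : E} (hu : ContDiffAt ℝ 2 u x) :
    deriv φ (u x) * Δ u x ≤ Δ (fun x ↦ φ (u x)) x := by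
  have hd2 : Differentiable ℝ (deriv φ) := hφ.differentiable_deriv_two
  have hdu : DifferentiableAt ℝ u x := hu.differentiableAt two_ne_zero
  have hdu2 : DifferentiableAt ℝ (fderiv ℝ u) x :=
    (hu.fderiv_right (m := 1) (by norm_num)).differentiableAt one_ne_zero
  have hfderiv : fderiv ℝ (fun x ↦ φ (u x)) =ᶠ[nhds x] fun x ↦ deriv φ (u x) • fderiv ℝ u x := by
    filter_upwards [hu.eventually (by simp)] with y hy
    exact ((hφ.differentiable two_ne_zero _).hasDerivAt.comp_hasFDerivAt y
      (hy.differentiableAt two_ne_zero).hasFDerivAt).fderiv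
  have hfderiv2 := ((hd2 (u x)).hasDerivAt.comp_hasFDerivAt x hdu.hasFDerivAt).smul
    hdu2.hasFDerivAt
  have hconvex : 0 ≤ deriv (deriv φ) (u x) := by
    have := (hφ'.monotoneOn_deriv fun s _ ↦ hφ.differentiable two_ne_zero s)
    exact (monotoneOn_univ.1 this).deriv_nonneg
  simp only [laplacian_eq_sum_fderiv_fderiv (stdOrthonormalBasis ℝ E), hfderiv.fderiv_eq,
    Finset.mul_sum]
  refine Finset.sum_le_sum fun i _ ↦ ?_
  rw [show fderiv ℝ (fun x ↦ deriv φ (u x) • fderiv ℝ u x) x = _ from hfderiv2.fderiv]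
  simp [mul_assoc, mul_nonneg hconvex (mul_self_nonneg _)]

variable [MeasurableSpace E] [BorelSpace E] (μ : Measure E) [μ.IsAddHaarMeasure]

lemma integral_mul_fderiv_fderiv_apply {P w : E → ℝ} (hP : ContDiff ℝ 1 P)
    (hPs : HasCompactSupport P) (hw : ContDiff ℝ 2 w) (v : E) :
    ∫ x, P x * fderiv ℝ (fderiv ℝ w) x v v ∂μ = -∫ x, fderiv ℝ P x v * fderiv ℝ w x v ∂μ := by
  have hw' : ContDiff ℝ 1 (fderiv ℝ w) := hw.fderiv_right (by norm_num)
  have hdw (x : E) : HasFDerivAt (fun x ↦ fderiv ℝ w x v)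
      ((fderiv ℝ (fderiv ℝ w) x).flip v) x := by
    simpa using (hw'.differentiable one_ne_zero x).hasFDerivAt.clm_apply (hasFDerivAt_const v x)
  have : Continuous P := hP.continuous
  have : Continuous (fderiv ℝ P) := hP.continuous_fderiv one_ne_zero
  have : Continuous (fderiv ℝ w) := hw'.continuous
  have : Continuous (fderiv ℝ (fderiv ℝ w)) := hw'.continuous_fderiv one_ne_zero
  have hparts := integral_mul_fderiv_eq_neg_fderiv_mul_of_integrable (μ := μ) (f := P)
    (g := fun x ↦ fderiv ℝ w x v) (v := v)
    (Continuous.integrable_of_hasCompactSupport (by fun_prop)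
      (hPs.fderiv_apply (𝕜 := ℝ) v).mul_right)
    (by
      simp only [(hdw _).fderiv, ContinuousLinearMap.flip_apply]
      exact Continuous.integrable_of_hasCompactSupport (by fun_prop) hPs.mul_right)
    (Continuous.integrable_of_hasCompactSupport (by fun_prop) hPs.mul_right)
    (fun x _ ↦ hP.differentiable one_ne_zero x) (fun x _ ↦ (hdw x).differentiableAt)
  simpa only [(hdw _).fderiv, ContinuousLinearMap.flip_apply] using hparts

lemma integral_mul_laplacian {P w : E → ℝ} (hP : ContDiff ℝ 1 P) (hPs : HasCompactSupport P)
    (hw : ContDiff ℝ 2 w) :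
    ∫ x, P x * Δ w x ∂μ = -∫ x, fderiv ℝ w x (gradient P x) ∂μ := by
  set b := stdOrthonormalBasis ℝ E
  have : Continuous P := hP.continuous
  have : Continuous (fderiv ℝ P) := hP.continuous_fderiv one_ne_zero
  have hw' : ContDiff ℝ 1 (fderiv ℝ w) := hw.fderiv_right (by norm_num)
  have : Continuous (fderiv ℝ w) := hw'.continuous
  have : Continuous (fderiv ℝ (fderiv ℝ w)) := hw'.continuous_fderiv one_ne_zero
  have hint1 (i) : Integrable (fun x ↦ fderiv ℝ P x (b i) * fderiv ℝ w x (b i)) μ :=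
    Continuous.integrable_of_hasCompactSupport (by fun_prop)
      (hPs.fderiv_apply (𝕜 := ℝ) (b i)).mul_right
  have hint2 (i) : Integrable (fun x ↦ P x * fderiv ℝ (fderiv ℝ w) x (b i) (b i)) μ :=
    Continuous.integrable_of_hasCompactSupport (by fun_prop) hPs.mul_right
  have hgrad (x : E) : fderiv ℝ w x (gradient P x)
      = ∑ i, fderiv ℝ P x (b i) * fderiv ℝ w x (b i) := by
    conv_lhs => rw [← b.sum_repr' (gradient P x)]
    simp [inner_gradient_right]
  simp only [laplacian_eq_sum_fderiv_fderiv b, hgrad, Finset.mul_sum]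
  rw [integral_finsetSum _ fun i _ ↦ hint2 i, integral_finsetSum _ fun i _ ↦ hint1 i,
    ← Finset.sum_neg_distrib]
  exact Finset.sum_congr rfl fun i _ ↦ integral_mul_fderiv_fderiv_apply μ hP hPs hw (b i)

end Laplacian

section Kernels

open Metric

lemma hasCompactSupport_of_eq_zero_off_ball {X : Type*} [PseudoMetricSpace X] [ProperSpace X]
    {θ : X → ℝ} {c : X} {r : ℝ} (hθ : ∀ x ∉ ball c r, θ x = 0) : HasCompactSupport θ :=
  .intro (isCompact_closedBall c r) fun x hx ↦ hθ x fun h ↦ hx (ball_subset_closedBall h)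

variable {E : Type*} [NormedAddCommGroup E]

/-- The weight of the ball averages below, a smooth function supported in the unit ball. -/
noncomputable def ballWeight (x : E) : ℝ := smoothTransition (1 - ‖x‖ ^ 2)

/-- A potential for the field `x ↦ -(2 * ballWeight x) • x`, supported in the unit ball. -/
noncomputable def ballPotential (x : E) : ℝ := smoothPosPart 1 (1 - ‖x‖ ^ 2)

lemma one_sub_norm_sq_nonpos {x : E} (hx : x ∉ ball (0 : E) 1) : 1 - ‖x‖ ^ 2 ≤ 0 := by
  rw [mem_ball_zero_iff, not_lt] at hx
  nlinarith

lemma ballWeight_mem_Icc (x : E) : ballWeight x ∈ Set.Icc 0 1 :=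
  ⟨smoothTransition.nonneg _, smoothTransition.le_one _⟩

lemma ballWeight_eq_zero {x : E} (hx : x ∉ ball (0 : E) 1) : ballWeight x = 0 :=
  smoothTransition.zero_of_nonpos (one_sub_norm_sq_nonpos hx)

lemma continuous_ballWeight : Continuous (ballWeight (E := E)) :=
  smoothTransition.continuous.comp (by fun_prop)

lemma ballPotential_mem_Icc (x : E) : ballPotential x ∈ Set.Icc 0 1 :=
  ⟨smoothPosPart.nonneg zero_le_one,
    (smoothPosPart.le_max zero_le_one).trans (max_le (by simp) zero_le_one)⟩

lemma ballPotential_eq_zero {x : E} (hx : x ∉ ball (0 : E) 1) : ballPotential x = 0 :=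
  smoothPosPart.eq_zero_of_nonpos zero_le_one (one_sub_norm_sq_nonpos hx)

variable [InnerProductSpace ℝ E]

lemma contDiff_ballPotential : ContDiff ℝ 1 (ballPotential (E := E)) :=
  (smoothPosPart.contDiff 1 (n := 1)).comp (contDiff_const.sub (contDiff_norm_sq ℝ))

lemma gradient_ballPotential [CompleteSpace E] (x : E) :
    gradient ballPotential x = -(2 * ballWeight x) • x := by
  refine HasGradientAt.gradient (hasGradientAt_iff_hasFDerivAt.2 ?_)
  refine ((smoothPosPart.hasDerivAt 1 (1 - ‖x‖ ^ 2)).comp_hasFDerivAt x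
    ((hasStrictFDerivAt_norm_sq x).hasFDerivAt.const_sub 1)).congr_fderiv ?_
  ext v
  simp only [div_one, smul_neg, neg_apply, smul_apply, coe_innerSL_apply, nsmul_eq_mul,
    Nat.cast_ofNat, smul_eq_mul, ballWeight, neg_smul, map_neg, map_smul,
    InnerProductSpace.toDual_apply_apply, neg_inj]
  ring

lemma integral_ballWeight_pos [FiniteDimensional ℝ E] [MeasurableSpace E] [BorelSpace E]
    (μ : Measure E) [μ.IsAddHaarMeasure] : 0 < ∫ x, ballWeight x ∂μ :=
  continuous_ballWeight.integral_pos_of_hasCompactSupport_nonneg_nonzero (x := 0)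
    (hasCompactSupport_of_eq_zero_off_ball fun _ ↦ ballWeight_eq_zero)
    (fun x ↦ (ballWeight_mem_Icc x).1) (by simp [ballWeight])

end Kernels

section BallAverage

open Metric InnerProductSpace Laplacian

variable {E : Type*} [NormedAddCommGroup E] [InnerProductSpace ℝ E] [MeasurableSpace E]

/-- The weighted average (up to normalization) of `w` over the ball of radius `r` about `z`,
transported to the unit ball. -/
noncomputable def ballAverage (μ : Measure E) (w : E → ℝ) (z : E) (r : ℝ) : ℝ :=
  ∫ x, ballWeight x * w (z + r • x) ∂μ

lemma ballAverage_zero (μ : Measure E) (w : E → ℝ) (z : E) :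
    ballAverage μ w z 0 = w z * ∫ x, ballWeight x ∂μ := by
  simp only [ballAverage, zero_smul, add_zero, integral_mul_const, mul_comm (w z)]

variable [FiniteDimensional ℝ E] [BorelSpace E] (μ : Measure E) [μ.IsAddHaarMeasure] {w : E → ℝ}

lemma hasDerivAt_ballAverage (hw : ContDiff ℝ 1 w) (hws : HasCompactSupport w) (z : E) (r : ℝ) :
    HasDerivAt (ballAverage μ w z) (∫ x, ballWeight x * fderiv ℝ w (z + r • x) x ∂μ) r := by
  have : Continuous (ballWeight (E := E)) := continuous_ballWeight
  have hρs : HasCompactSupport (ballWeight (E := E)) :=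
    hasCompactSupport_of_eq_zero_off_ball fun _ ↦ ballWeight_eq_zero
  have : Continuous w := hw.continuous
  have hcw' : Continuous (fderiv ℝ w) := hw.continuous_fderiv one_ne_zero
  have hderiv (x : E) (r : ℝ) :
      HasDerivAt (fun r ↦ w (z + r • x)) (fderiv ℝ w (z + r • x) x) r := by
    have hline : HasDerivAt (fun r : ℝ ↦ z + r • x) x r := by
      simpa using ((hasDerivAt_id r).smul_const x).const_add z
    exact (hw.differentiable one_ne_zero _).hasFDerivAt.comp_hasDerivAt r hline
  obtain ⟨C, hC⟩ := (hws.fderiv ℝ).exists_bound_of_continuous hcw'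
  refine (hasDerivAt_integral_of_dominated_loc_of_deriv_le
    (F := fun r x ↦ ballWeight x * w (z + r • x))
    (F' := fun r x ↦ ballWeight x * fderiv ℝ w (z + r • x) x)
    (bound := fun x ↦ ballWeight x * (C * ‖x‖)) Filter.univ_mem
    (.of_forall fun r ↦ Continuous.aestronglyMeasurable (by fun_prop))
    (Continuous.integrable_of_hasCompactSupport (by fun_prop) hρs.mul_right)
    (Continuous.aestronglyMeasurable (by fun_prop))
    (.of_forall fun x r _ ↦ ?_)
    (Continuous.integrable_of_hasCompactSupport (by fun_prop) hρs.mul_right)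
    (.of_forall fun x r _ ↦ (hderiv x r).const_mul _)).2
  rw [norm_mul, norm_of_nonneg (ballWeight_mem_Icc x).1]
  exact mul_le_mul_of_nonneg_left ((fderiv ℝ w _).le_of_opNorm_le (hC _) x)
    (ballWeight_mem_Icc x).1

lemma integral_ballWeight_mul_fderiv (hw : ContDiff ℝ 2 w) (z : E) {r : ℝ} (hr : r ≠ 0) :
    ∫ x, ballWeight x * fderiv ℝ w (z + r • x) x ∂μ
      = r / 2 * ∫ x, ballPotential x * Δ w (z + r • x) ∂μ := by
  have hfderiv (x : E) : fderiv ℝ (fun x ↦ w (z + r • x)) x = r • fderiv ℝ w (z + r • x) := by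
    rw [fderiv_comp_smul (f := fun y ↦ w (z + y)), fderiv_comp_add_left]
  have hgreen := integral_mul_laplacian μ contDiff_ballPotential
    (hasCompactSupport_of_eq_zero_off_ball fun _ ↦ ballPotential_eq_zero)
    (w := fun x ↦ w (z + r • x)) (by fun_prop)
  simp only [laplacian_comp_add_smul hw, hfderiv, gradient_ballPotential, map_smul] at hgreen
  have hscaled : r ^ 2 * ∫ x, ballPotential x * Δ w (z + r • x) ∂μ
      = 2 * r * ∫ x, ballWeight x * fderiv ℝ w (z + r • x) x ∂μ := by
    rw [← integral_const_mul, ← integral_const_mul]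
    simp only [mul_left_comm (r ^ 2), hgreen, ← integral_neg]
    exact integral_congr_ae <| .of_forall fun x ↦ by
      simp only [smul_apply, smul_eq_mul, neg_mul, neg_neg]
      ring
  exact mul_left_cancel₀ (mul_ne_zero two_ne_zero hr) (hscaled.symm.trans (by ring))

end BallAverage

section LpNorm

open ENNReal

variable {α F : Type*} [MeasurableSpace α] {μ ν : Measure α} [NormedAddCommGroup F] {f : α → F}
  {p : ℝ≥0∞}

lemma integral_norm_le_lpNorm_mul [IsFiniteMeasure μ] (hp : 1 ≤ p) (hf : MemLp f p μ) :
    ∫ x, ‖f x‖ ∂μ ≤ lpNorm f p μ * μ.real Set.univ ^ (1 - p.toReal⁻¹) := by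
  have h := eLpNorm_le_eLpNorm_mul_rpow_measure_univ hp hf.1
  have hexp : 0 ≤ 1 - p.toReal⁻¹ := by
    rw [sub_nonneg]
    rcases eq_or_ne p ∞ with rfl | hp'
    · simp
    · exact inv_le_one_of_one_le₀ (by simpa using toReal_mono hp' hp)
  rw [← lpNorm_one_eq_integral_norm hf.1, ← toReal_eLpNorm hf.1, ← toReal_eLpNorm hf.1,
    Measure.real, toReal_rpow, ← toReal_mul]
  refine toReal_mono (mul_ne_top hf.2.ne (rpow_ne_top_of_nonneg hexp (measure_ne_top _ _))) ?_
  simpa using h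

lemma lpNorm_congr_ae {g : α → F} (h : f =ᵐ[μ] g) : lpNorm f p μ = lpNorm g p μ := by
  by_cases hf : AEStronglyMeasurable f μ
  · rw [← toReal_eLpNorm hf, ← toReal_eLpNorm (hf.congr h), eLpNorm_congr_ae h]
  · rw [lpNorm_of_not_aestronglyMeasurable hf,
      lpNorm_of_not_aestronglyMeasurable fun hg ↦ hf (hg.congr h.symm)]

lemma lpNorm_mono_measure (hμν : μ ≤ ν) (hf : MemLp f p ν) : lpNorm f p μ ≤ lpNorm f p ν := by
  rw [← toReal_eLpNorm hf.1, ← toReal_eLpNorm (hf.1.mono_measure hμν)]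
  exact toReal_mono hf.2.ne (eLpNorm_mono_measure f hμν)

lemma memLp_ofReal {s : ℝ} (hs : 0 < s) (hf : AEStronglyMeasurable f μ)
    (hfs : Integrable (fun x ↦ ‖f x‖ ^ s) μ) : MemLp f (.ofReal s) μ :=
  (integrable_norm_rpow_iff hf (by simpa) ofReal_ne_top).1 <| by
    simpa only [toReal_ofReal hs.le] using hfs

lemma lpNorm_ofReal {s : ℝ} (hs : 0 < s) (hf : AEStronglyMeasurable f μ) :
    lpNorm f (.ofReal s) μ = (∫ x, ‖f x‖ ^ s ∂μ) ^ s⁻¹ := by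
  rw [lpNorm_eq_integral_norm_rpow_toReal (by simpa) ofReal_ne_top hf, toReal_ofReal hs.le]

lemma lpNorm_two (hf : AEStronglyMeasurable f μ) :
    lpNorm f 2 μ = (∫ x, ‖f x‖ ^ 2 ∂μ) ^ ((1 : ℝ) / 2) := by
  simp [lpNorm_eq_integral_norm_rpow_toReal two_ne_zero ofNat_ne_top hf]

end LpNorm

section Scaling

open Metric Module
open scoped ENNReal

variable {F : Type*} [NormedAddCommGroup F] {E : Type*} [NormedAddCommGroup E] [NormedSpace ℝ E]
  [FiniteDimensional ℝ E] [MeasurableSpace E] [BorelSpace E] (μ : Measure E) [μ.IsAddHaarMeasure]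

lemma map_add_smul_restrict_ball (z : E) {r : ℝ} (hr : 0 < r) :
    (μ.restrict (ball 0 1)).map (fun x ↦ z + r • x)
      = ((r ^ finrank ℝ E)⁻¹).toNNReal • μ.restrict (ball z r) := by
  have hball : (fun x : E ↦ z + r • x) ⁻¹' ball z r = ball 0 1 := by
    ext x
    simp [norm_smul, abs_of_pos hr, hr]
  have hemb : MeasurableEmbedding fun x : E ↦ z + r • x :=
    (measurableEmbedding_addLeft z).comp (measurableEmbedding_const_smul₀ hr.ne')
  have hmap : μ.map (fun x ↦ z + r • x) = ((r ^ finrank ℝ E)⁻¹).toNNReal • μ := by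
    rw [show (fun x : E ↦ z + r • x) = (z + ·) ∘ (r • ·) from rfl,
      ← Measure.map_map (measurable_const_add z) (measurable_const_smul r),
      Measure.map_addHaar_smul μ hr.ne', abs_of_pos (by positivity), Measure.map_smul,
      map_add_left_eq_self]
    rfl
  rw [← hball, ← hemb.restrict_map, hmap, Measure.restrict_smul]

lemma memLp_comp_add_smul {f : E → F} {p : ℝ≥0∞} {z : E} {r : ℝ} (hr : 0 < r)
    (hf : MemLp f p (μ.restrict (ball z r))) :
    MemLp (fun x ↦ f (z + r • x)) p (μ.restrict (ball 0 1)) := by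
  refine MemLp.comp_of_map (f := fun x ↦ z + r • x) ?_ (by fun_prop)
  rw [map_add_smul_restrict_ball μ z hr]
  exact hf.smul_measure ENNReal.coe_ne_top

lemma lpNorm_comp_add_smul {f : E → F} {p : ℝ≥0∞} {z : E} {r : ℝ} (hr : 0 < r)
    (hf : AEStronglyMeasurable f (μ.restrict (ball z r))) :
    lpNorm (fun x ↦ f (z + r • x)) p (μ.restrict (ball 0 1))
      = r ^ (-(finrank ℝ E / p.toReal)) * lpNorm f p (μ.restrict (ball z r)) := by
  have hmap := map_add_smul_restrict_ball μ z hr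
  have hf' : AEStronglyMeasurable f ((μ.restrict (ball 0 1)).map fun x ↦ z + r • x) := by
    rw [hmap]
    exact hf.smul_measure _
  have hcomp := eLpNorm_map_measure (p := p) hf' (by fun_prop)
  calc lpNorm (fun x ↦ f (z + r • x)) p (μ.restrict (ball 0 1))
      = lpNorm f p (((r ^ finrank ℝ E)⁻¹).toNNReal • μ.restrict (ball z r)) := by
        rw [← hmap, ← toReal_eLpNorm hf', hcomp,
          toReal_eLpNorm (hf'.comp_aemeasurable (by fun_prop)), Function.comp_def]
    _ = r ^ (-(finrank ℝ E / p.toReal)) * lpNorm f p (μ.restrict (ball z r)) := by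
        rw [lpNorm_smul_measure_of_ne_zero (by simp [hr]), NNReal.smul_def, smul_eq_mul,
          NNReal.coe_rpow, Real.coe_toNNReal _ (by positivity), ← rpow_natCast, ← rpow_neg hr.le,
          ← rpow_mul hr.le, div_eq_mul_inv, neg_mul]

lemma integral_mul_comp_add_smul_le {θ F f : E → ℝ} {p : ℝ≥0∞} {z : E} {r R : ℝ}
    (hθ : Continuous θ) (hθ01 : ∀ x, θ x ∈ Set.Icc 0 1) (hθ0 : ∀ x ∉ ball (0 : E) 1, θ x = 0)
    (hF : Continuous F) (hr : 0 < r) (hrR : r ≤ R) (hp : 1 ≤ p)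
    (hf : MemLp f p (μ.restrict (ball z R))) (hFf : ∀ y ∈ ball z R, F y ≤ |f y|) :
    ∫ x, θ x * F (z + r • x) ∂μ ≤ μ.real (ball (0 : E) 1) ^ (1 - p.toReal⁻¹)
      * r ^ (-(finrank ℝ E / p.toReal)) * lpNorm f p (μ.restrict (ball z R)) := by
  have hball : μ.restrict (ball z r) ≤ μ.restrict (ball z R) :=
    Measure.restrict_mono_set μ (ball_subset_ball hrR)
  have hfr := memLp_comp_add_smul μ hr (hf.mono_measure hball)
  have : IsFiniteMeasure (μ.restrict (ball (0 : E) 1)) := ⟨by simpa using measure_ball_lt_top⟩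
  have hθF : Integrable (fun x ↦ θ x * F (z + r • x)) μ :=
    Continuous.integrable_of_hasCompactSupport (by fun_prop)
      (hasCompactSupport_of_eq_zero_off_ball hθ0).mul_right
  calc ∫ x, θ x * F (z + r • x) ∂μ
      = ∫ x in ball 0 1, θ x * F (z + r • x) ∂μ :=
        (setIntegral_eq_integral_of_forall_compl_eq_zero fun x hx ↦ by simp [hθ0 x hx]).symm
    _ ≤ ∫ x in ball 0 1, ‖f (z + r • x)‖ ∂μ := by
        refine setIntegral_mono_on hθF.integrableOn (hfr.integrable hp).norm measurableSet_ball
          fun x hx ↦ ?_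
        have hmem : z + r • x ∈ ball z R := by
          refine ball_subset_ball hrR ?_
          simpa [norm_smul, abs_of_pos hr, hr] using hx
        calc θ x * F (z + r • x) ≤ θ x * |f (z + r • x)| :=
              mul_le_mul_of_nonneg_left (hFf _ hmem) (hθ01 x).1
          _ ≤ ‖f (z + r • x)‖ := mul_le_of_le_one_left (abs_nonneg _) (hθ01 x).2
    _ ≤ lpNorm (fun x ↦ f (z + r • x)) p (μ.restrict (ball 0 1))
          * μ.real (ball (0 : E) 1) ^ (1 - p.toReal⁻¹) := by
        simpa using integral_norm_le_lpNorm_mul hp hfr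
    _ ≤ _ := by
        rw [lpNorm_comp_add_smul μ hr (hf.mono_measure hball).1, mul_comm, mul_assoc]
        gcongr
        exact lpNorm_mono_measure hball hf

end Scaling

section Growth

open Metric InnerProductSpace Laplacian Module
open scoped ENNReal

lemma two_sub_div_toReal_pos {n : ℕ} {p : ℝ≥0∞} (hp : n < 2 * p) : 0 < 2 - n / p.toReal := by
  rcases eq_or_ne p ∞ with rfl | hp'
  · simp
  have hn : (n : ℝ) < 2 * p.toReal := by
    simpa using ENNReal.toReal_strict_mono (ENNReal.mul_ne_top (by simp) hp') hp
  have hp0 : 0 < p.toReal := by linarith [n.cast_nonneg (α := ℝ)]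
  rwa [sub_pos, div_lt_iff₀ hp0]

variable {E : Type*} [NormedAddCommGroup E] [InnerProductSpace ℝ E] [FiniteDimensional ℝ E]
  [MeasurableSpace E] [BorelSpace E] (μ : Measure E) [μ.IsAddHaarMeasure] {w g h : E → ℝ}
  {p q : ℝ≥0∞} {z : E} {R : ℝ}

lemma monotoneOn_ballAverage_add_rpow (hw : ContDiff ℝ 2 w) (hws : HasCompactSupport w)
    (hp : 1 ≤ p) (hnp : finrank ℝ E < 2 * p) (hg : MemLp g p (μ.restrict (ball z R)))
    (hwg : ∀ y ∈ ball z R, -Δ w y ≤ |g y|) :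
    MonotoneOn (fun r ↦ ballAverage μ w z r + μ.real (ball (0 : E) 1) ^ (1 - p.toReal⁻¹)
      * lpNorm g p (μ.restrict (ball z R)) / (2 * (2 - finrank ℝ E / p.toReal))
      * r ^ (2 - finrank ℝ E / p.toReal)) (Set.Icc 0 R) := by
  have hκ : 0 < 2 - finrank ℝ E / p.toReal := two_sub_div_toReal_pos hnp
  set κ := 2 - finrank ℝ E / p.toReal
  set K := μ.real (ball (0 : E) 1) ^ (1 - p.toReal⁻¹) * lpNorm g p (μ.restrict (ball z R))
  have hm (r : ℝ) := hasDerivAt_ballAverage μ (hw.of_le one_le_two) hws z r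
  have hpow {r : ℝ} (hr : 0 < r) := (hasDerivAt_rpow_const (p := κ) (.inl hr.ne')).const_mul
    (K / (2 * κ))
  refine monotoneOn_of_hasDerivWithinAt_nonneg (convex_Icc 0 R)
    (fun r _ ↦ ((hm r).continuousAt.add
      ((continuousAt_rpow_const r κ (.inr hκ.le)).const_mul _)).continuousWithinAt)
    (fun r hr ↦ ((hm r).add (hpow (interior_Icc.subset hr).1)).hasDerivWithinAt) fun r hr ↦ ?_
  rw [interior_Icc] at hr
  have hlap : ∫ x, ballPotential x * -Δ w (z + r • x) ∂μ ≤ r ^ (κ - 2) * K := by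
    refine (integral_mul_comp_add_smul_le μ (F := fun y ↦ -Δ w y)
      contDiff_ballPotential.continuous ballPotential_mem_Icc (fun _ ↦ ballPotential_eq_zero)
      (continuous_laplacian hw).neg hr.1 hr.2.le hp hg hwg).trans_eq ?_
    rw [show κ - 2 = -(finrank ℝ E / p.toReal) by ring]
    ring
  rw [integral_ballWeight_mul_fderiv μ hw z hr.1.ne']
  have hcancel : K / (2 * κ) * (κ * r ^ (κ - 1)) = r / 2 * (r ^ (κ - 2) * K) := by
    rw [show κ - 1 = (κ - 2) + 1 by ring, rpow_add_one hr.1.ne']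
    field_simp
  rw [hcancel, ← mul_add]
  simp only [mul_neg, integral_neg] at hlap
  exact mul_nonneg (by linarith [hr.1]) (by linarith)

variable (p q R) in
/-- The constant in the local bound at the centre of a ball of radius `R`. The first summand is the
Hölder factor of the average at radius `R`, the second one bounds the decrease of the averages over
`[0, R]`, and the denominator normalizes the averages. -/
noncomputable def localBoundConst : ℝ :=
  (μ.real (ball (0 : E) 1) ^ (1 - q.toReal⁻¹) * R ^ (-(finrank ℝ E / q.toReal))
    + μ.real (ball (0 : E) 1) ^ (1 - p.toReal⁻¹) / (2 * (2 - finrank ℝ E / p.toReal))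
      * R ^ (2 - finrank ℝ E / p.toReal)) / ∫ x : E, ballWeight x ∂μ

lemma localBoundConst_pos (hR : 0 < R) (hnp : finrank ℝ E < 2 * p) :
    0 < localBoundConst μ p q R := by
  have : 0 < 2 - finrank ℝ E / p.toReal := two_sub_div_toReal_pos hnp
  have : 0 < ∫ x : E, ballWeight x ∂μ := integral_ballWeight_pos μ
  have : 0 < μ.real (ball (0 : E) 1) :=
    ENNReal.toReal_pos (measure_ball_pos μ 0 one_pos).ne' measure_ball_lt_top.ne
  unfold localBoundConst
  positivity

lemma le_localBoundConst_mul (hw : ContDiff ℝ 2 w) (hws : HasCompactSupport w) (hR : 0 < R)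
    (hp : 1 ≤ p) (hnp : finrank ℝ E < 2 * p) (hg : MemLp g p (μ.restrict (ball z R)))
    (hwg : ∀ y ∈ ball z R, -Δ w y ≤ |g y|)
    (hq : 1 ≤ q) (hh : MemLp h q (μ.restrict (ball z R))) (hwh : ∀ y ∈ ball z R, w y ≤ |h y|) :
    w z ≤ localBoundConst μ p q R
      * (lpNorm h q (μ.restrict (ball z R)) + lpNorm g p (μ.restrict (ball z R))) := by
  have hκ : 0 < 2 - finrank ℝ E / p.toReal := two_sub_div_toReal_pos hnp
  have hmono := monotoneOn_ballAverage_add_rpow μ hw hws hp hnp hg hwg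
    (Set.left_mem_Icc.2 hR.le) (Set.right_mem_Icc.2 hR.le) hR.le
  have hend : ballAverage μ w z R ≤ μ.real (ball (0 : E) 1) ^ (1 - q.toReal⁻¹)
      * R ^ (-(finrank ℝ E / q.toReal)) * lpNorm h q (μ.restrict (ball z R)) :=
    integral_mul_comp_add_smul_le μ continuous_ballWeight ballWeight_mem_Icc
      (fun _ ↦ ballWeight_eq_zero) hw.continuous hR le_rfl hq hh hwh
  simp only [ballAverage_zero, zero_rpow hκ.ne', mul_zero, add_zero] at hmono
  rw [localBoundConst, div_mul_eq_mul_div, le_div_iff₀ (integral_ballWeight_pos μ), add_mul]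
  refine (hmono.trans (add_le_add_left hend _)).trans ?_
  rw [mul_div_right_comm, mul_right_comm _ (lpNorm g p _)]
  gcongr
  · exact le_add_of_nonneg_right lpNorm_nonneg
  · exact le_add_of_nonneg_left lpNorm_nonneg

end Growth

section Cutoff

open scoped Topology Manifold

lemma exists_contDiff_hasCompactSupport_eventuallyEq {E F : Type*} [NormedAddCommGroup E]
    [NormedSpace ℝ E] [FiniteDimensional ℝ E] [NormedAddCommGroup F] [NormedSpace ℝ F] {n : ℕ∞}
    {u : E → F} {K Ω : Set E} (hK : IsCompact K) (hΩ : IsOpen Ω) (hKΩ : K ⊆ Ω)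
    (hu : ContDiffOn ℝ n u Ω) :
    ∃ v : E → F, ContDiff ℝ n v ∧ HasCompactSupport v ∧ ∀ x ∈ K, v =ᶠ[𝓝 x] u := by
  obtain ⟨L, hL, hKL, hLΩ⟩ := exists_compact_between hK hΩ hKΩ
  obtain ⟨χ, hχ1, hχ0, -⟩ := exists_contMDiffMap_one_nhds_of_subset_interior (n := n)
    𝓘(ℝ, E) hK.isClosed hKL
  have hv0 (x) (hx : x ∉ L) : χ x • u x = 0 := by rw [hχ0 x hx, zero_smul]
  refine ⟨fun x ↦ χ x • u x, contDiff_iff_contDiffAt.2 fun x ↦ ?_, .intro hL hv0, fun x hx ↦ ?_⟩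
  · by_cases hx : x ∈ Ω
    · exact χ.contMDiff.contDiff.contDiffAt.smul (hu.contDiffAt (hΩ.mem_nhds hx))
    · refine (contDiffAt_const (c := (0 : F))).congr_of_eventuallyEq ?_
      filter_upwards [hL.isClosed.isOpen_compl.mem_nhds fun h ↦ hx (hLΩ h)] with y hy
        using hv0 y hy
  · filter_upwards [hχ1.filter_mono (nhds_le_nhdsSet hx)] with y hy
    rw [hy, one_smul]

end Cutoff

section LocalBound

open Metric InnerProductSpace Laplacian Module
open scoped ENNReal

variable {E : Type*} [NormedAddCommGroup E] [InnerProductSpace ℝ E] [FiniteDimensional ℝ E]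
  {u g : E → ℝ} {x z : E}

lemma neg_laplacian_smoothPosPart_comp_le {ε c : ℝ} (hε : 0 ≤ ε) (hu : ContDiffAt ℝ 2 u x)
    (hc : 0 < u x → -Δ u x ≤ c) : -Δ (fun x ↦ smoothPosPart ε (u x)) x ≤ |c| := by
  have hchain := deriv_mul_laplacian_le_laplacian_comp (smoothPosPart.contDiff ε (n := 2))
    (smoothPosPart.convexOn hε) hu
  rw [smoothPosPart.deriv_eq] at hchain
  refine (neg_le_neg hchain).trans ?_
  rcases le_or_gt (u x) 0 with hux | hux
  · simp [smoothTransition.zero_of_nonpos (div_nonpos_of_nonpos_of_nonneg hux hε)]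
  · calc -(smoothTransition (u x / ε) * Δ u x) = smoothTransition (u x / ε) * -Δ u x := by ring
      _ ≤ smoothTransition (u x / ε) * |c| :=
        mul_le_mul_of_nonneg_left ((hc hux).trans (le_abs_self c)) (smoothTransition.nonneg _)
      _ ≤ |c| := mul_le_of_le_one_left (abs_nonneg c) (smoothTransition.le_one _)

variable [MeasurableSpace E] [BorelSpace E] (μ : Measure E) [μ.IsAddHaarMeasure] {p q : ℝ≥0∞}
  {R : ℝ}

lemma le_localBoundConst_mul_lpNorm_max (hu : ContDiff ℝ 2 u) (hus : HasCompactSupport u)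
    (hR : 0 < R) (hp : 1 ≤ p) (hnp : finrank ℝ E < 2 * p) {s : Set E} (hs : ball z R ⊆ s)
    (hg : MemLp g p (μ.restrict s)) (hug : ∀ x ∈ ball z R, 0 < u x → -Δ u x ≤ g x) (hq : 1 ≤ q) :
    u z ≤ localBoundConst μ p q R
      * (lpNorm (fun x ↦ max (u x) 0) q (μ.restrict s) + lpNorm g p (μ.restrict s)) := by
  have hμ : μ.restrict (ball z R) ≤ μ.restrict s := Measure.restrict_mono_set μ hs
  have hpos : MemLp (fun x ↦ max (u x) 0) q (μ.restrict s) :=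
    (hu.continuous.max continuous_const).memLp_of_hasCompactSupport
      (hus.comp_left (g := fun s ↦ max s 0) (max_self 0))
  refine le_of_forall_pos_sub_le fun ε hε ↦ (smoothPosPart.sub_le hε).trans ?_
  refine (le_localBoundConst_mul μ (w := fun x ↦ smoothPosPart ε (u x))
    ((smoothPosPart.contDiff ε (n := 2)).comp hu)
    (hus.comp_left (smoothPosPart.eq_zero_of_nonpos hε.le le_rfl)) hR hp hnp (hg.mono_measure hμ)
    (fun x hx ↦ neg_laplacian_smoothPosPart_comp_le hε.le hu.contDiffAt (hug x hx)) hq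
    (hpos.mono_measure hμ)
    fun x _ ↦ (smoothPosPart.le_max hε.le).trans (le_abs_self _)).trans ?_
  exact mul_le_mul_of_nonneg_left
    (add_le_add (lpNorm_mono_measure hμ hpos) (lpNorm_mono_measure hμ hg))
    (localBoundConst_pos μ hR hnp).le

theorem local_boundedness_subsolution_general {r : ℝ} (hp : 1 ≤ p) (hnp : finrank ℝ E < 2 * p)
    (hq : 1 ≤ q) (hrR : r < R) :
    ∃ C > (0 : ℝ), ∀ Ω : Set E, IsOpen Ω → ∀ y : E, closedBall y R ⊆ Ω →
      ∀ u g : E → ℝ, ContDiffOn ℝ 2 u Ω → MemLp g p (μ.restrict (ball y R)) →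
        (∀ x ∈ ball y R, 0 < u x → -Δ u x ≤ g x) →
        ∀ z ∈ ball y r,
          u z ≤ C * (lpNorm (fun x ↦ max (u x) 0) q (μ.restrict (ball y R))
            + lpNorm g p (μ.restrict (ball y R))) := by
  have hδ : 0 < R - r := sub_pos.2 hrR
  refine ⟨localBoundConst μ p q (R - r), localBoundConst_pos μ hδ hnp,
    fun Ω hΩ y hy u g hu hg hug z hz ↦ ?_⟩
  obtain ⟨v, hv, hvs, hv_nhds⟩ :=
    exists_contDiff_hasCompactSupport_eventuallyEq (n := 2) (isCompact_closedBall y R) hΩ hy hu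
  have hvu {x} (hx : x ∈ ball y R) := hv_nhds x (ball_subset_closedBall hx)
  have hball : ball z (R - r) ⊆ ball y R := ball_subset_ball' (by linarith [mem_ball.1 hz])
  have hvg (x) (hx : x ∈ ball z (R - r)) : 0 < v x → -Δ v x ≤ g x := by
    rw [(laplacian_congr_nhds (hvu (hball hx))).eq_of_nhds, (hvu (hball hx)).eq_of_nhds]
    exact hug x (hball hx)
  have hvupos : lpNorm (fun x ↦ max (v x) 0) q (μ.restrict (ball y R))
      = lpNorm (fun x ↦ max (u x) 0) q (μ.restrict (ball y R)) :=
    lpNorm_congr_ae <| (ae_restrict_mem measurableSet_ball).mono fun x hx ↦ by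
      simp only [(hvu hx).eq_of_nhds]
  rw [← hvupos, ← (hvu (ball_subset_ball hrR.le hz)).eq_of_nhds]
  exact le_localBoundConst_mul_lpNorm_max μ hv hvs hδ hp hnp hball hg hvg hq

end LocalBound

section Coordinates

open InnerProductSpace Laplacian

variable {N : ℕ}

lemma lap_eq_laplacian (u : EuclideanSpace ℝ (Fin N) → ℝ) : lap u = Δ u := by
  ext x
  simp [lap, laplacian_eq_iteratedFDeriv_orthonormalBasis u (EuclideanSpace.basisFun (Fin N) ℝ)]

lemma finrank_euclideanSpace_lt_two_mul_ofReal {s : ℝ} (hs : N < 2 * s) :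
    (Module.finrank ℝ (EuclideanSpace ℝ (Fin N)) : ENNReal) < 2 * .ofReal s := by
  rw [finrank_euclideanSpace_fin, ← ENNReal.ofReal_ofNat, ← ENNReal.ofReal_mul zero_le_two,
    ENNReal.natCast_lt_ofReal]
  exact hs

end Coordinates

theorem local_boundedness_subsolution {N : ℕ} (hN : 3 ≤ N) (t R : ℝ)
    (ht : (N : ℝ) < t) (hR : 0 < R) :
    ∃ C > (0 : ℝ), ∀ (Ω : Set (EuclideanSpace ℝ (Fin N))), IsOpen Ω →
      ∀ y : EuclideanSpace ℝ (Fin N), Metric.closedBall y (2 * R) ⊆ Ω →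
      ∀ u g : EuclideanSpace ℝ (Fin N) → ℝ, ContDiffOn ℝ 2 u Ω →
        AEMeasurable g (volume.restrict (Metric.ball y (2 * R))) →
        IntegrableOn (fun x => |g x| ^ (t / 2)) (Metric.ball y (2 * R)) →
        (∀ x ∈ Ω, -lap u x + u x ≤ g x) →
        ∀ z ∈ Metric.ball y R,
          u z ≤ C * ((∫ x in Metric.ball y (2 * R), max (u x) 0 ^ 2) ^ ((1:ℝ)/2)
            + (∫ x in Metric.ball y (2 * R), |g x| ^ (t / 2)) ^ (2 / t)) := by
  have ht2 : 1 < t / 2 := by linarith [show (3 : ℝ) ≤ N from mod_cast hN]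
  obtain ⟨C, hC, hbound⟩ := local_boundedness_subsolution_general
    (volume : Measure (EuclideanSpace ℝ (Fin N))) (ENNReal.one_le_ofReal.2 ht2.le)
    (finrank_euclideanSpace_lt_two_mul_ofReal (by linarith)) one_le_two
    (show R < 2 * R by linarith)
  refine ⟨C, hC, fun Ω hΩ y hy u g hu hgm hgi hug z hz ↦ ?_⟩
  have hball := Metric.ball_subset_closedBall.trans hy
  have hupos : AEStronglyMeasurable (fun x ↦ max (u x) 0)
      (volume.restrict (Metric.ball y (2 * R))) :=
    ((hu.continuousOn.mono hball).sup continuousOn_const).aestronglyMeasurable measurableSet_ball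
  have hsub (x) (hx : x ∈ Metric.ball y (2 * R)) (hux : 0 < u x) :
      -Laplacian.laplacian u x ≤ g x := by
    rw [← lap_eq_laplacian]
    linarith [hug x (hball hx)]
  have huz := hbound Ω hΩ y hy u g hu
    (memLp_ofReal (one_pos.trans ht2) hgm.aestronglyMeasurable hgi) hsub z hz
  rw [lpNorm_ofReal (one_pos.trans ht2) hgm.aestronglyMeasurable, inv_div, lpNorm_two hupos] at huz
  simpa only [norm_eq_abs, sq_abs] using huz
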